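/- For all integers r ≥ 2, s ≥ 0 and k ≥ 0, one has the identity in ℚ: ⟨k choose s⟩_r · ⟨k+2 choose s+2⟩_{r-2} · (k+1) · (k+r-s-1) = (⟨k+1 choose s+1⟩_{r-1})^2 · (r-1) · (s+1), where k+r-s-1 is interpreted as an integer (possibly negative). -/

import Mathlib

/-- The `r`-Hoggatt binomial `⟨n choose k⟩_r = ∏_{j=0}^{r-1} C(n+j,k)/C(k+j,k)`, as a
rational number. -/
def hoggatt (r n k : ℕ) : ℚ :=
  ∏ j ∈ Finset.range r, ((n + j).choose k : ℚ) / ((k + j).choose k : ℚ)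

theorem hoggatt_succ (r n k : ℕ) : hoggatt (r + 1) n k =
    hoggatt r n k * (((n + r).choose k : ℚ) / ((k + r).choose k : ℚ)) := by
  unfold hoggatt
  rw [Finset.prod_range_succ]

theorem hoggatt_zero_of_lt (r n k : ℕ) (h : n < k) : hoggatt (r + 1) n k = 0 := by
  unfold hoggatt
  apply Finset.prod_eq_zero (i := 0) (by simp)
  simp [Nat.choose_eq_zero_of_lt h]

theorem choose_step (s d : ℕ) :
    ((s + d).choose (s + 1) : ℚ) * (s + 1) = ((s + d).choose s : ℚ) * d := by
  have := Nat.choose_succ_right_eq (s + d) s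
  rw [Nat.add_sub_cancel_left] at this
  exact_mod_cast this

theorem hoggatt_factor (s d m : ℕ) :
    (((s + (d + 1)).choose s : ℚ) / ((s + (m + 2)).choose s : ℚ)) *
      (((s + (d + 1)).choose (s + 2) : ℚ) / ((s + (m + 2)).choose (s + 2) : ℚ)) *
      ((d : ℚ) + 1) * ((m : ℚ) + 1) =
    (((s + (d + 1)).choose (s + 1) : ℚ) / ((s + (m + 2)).choose (s + 1) : ℚ)) ^ 2 *
      (d : ℚ) * ((m : ℚ) + 2) := by
  have e1 := choose_step s (d + 1)
  have e2 := choose_step (s + 1) d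
  have f1 := choose_step s (m + 2)
  have f2 := choose_step (s + 1) (m + 1)
  rw [show s + 1 + d = s + (d + 1) by ring] at e2
  rw [show s + 1 + (m + 1) = s + (m + 2) by ring] at f2
  have p0 : ((s + (m + 2)).choose s : ℚ) ≠ 0 := by
    exact_mod_cast (Nat.choose_pos (by omega)).ne'
  have p1 : ((s + (m + 2)).choose (s + 1) : ℚ) ≠ 0 := by
    exact_mod_cast (Nat.choose_pos (by omega)).ne'
  have p2 : ((s + (m + 2)).choose (s + 2) : ℚ) ≠ 0 := by
    exact_mod_cast (Nat.choose_pos (by omega)).ne'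
  simp only [add_assoc, Nat.reduceAdd] at e2 f2
  generalize ((s + (d + 1)).choose s : ℚ) = a0 at *
  generalize ((s + (d + 1)).choose (s + 1) : ℚ) = a1 at *
  generalize ((s + (d + 1)).choose (s + 2) : ℚ) = a2 at *
  generalize ((s + (m + 2)).choose s : ℚ) = b0 at *
  generalize ((s + (m + 2)).choose (s + 1) : ℚ) = b1 at *
  generalize ((s + (m + 2)).choose (s + 2) : ℚ) = b2 at *
  push_cast at *
  have hs : (s : ℚ) + 1 ≠ 0 := by positivity
  have hs2 : (s : ℚ) + 2 ≠ 0 := by positivity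
  have hm : (m : ℚ) + 2 ≠ 0 := by positivity
  have hd : (d : ℚ) + 1 ≠ 0 := by positivity
  have g0 : a0 = a1 * (s + 1) / (d + 1) := by field_simp; linarith
  have g2 : a2 = a1 * d / (s + 2) := by field_simp; linarith
  have k0 : b0 = b1 * (s + 1) / (m + 2) := by field_simp; linarith
  have k2 : b2 = b1 * (m + 1) / (s + 2) := by field_simp; linarith
  have hm1 : (m : ℚ) + 1 ≠ 0 := by positivity
  subst g0 g2 k0 k2
  field_simp

theorem hoggatt_aux (s t m : ℕ) :
    hoggatt (m + 2) (s + t) s * hoggatt m (s + t + 2) (s + 2) *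
        ((s : ℚ) + t + 1) * ((t : ℚ) + m + 1) =
    (hoggatt (m + 1) (s + t + 1) (s + 1)) ^ 2 * ((m : ℚ) + 1) * ((s : ℚ) + 1) := by
  induction m with
  | zero =>
    have e1 := choose_step s (t + 1)
    have e2 := Nat.add_one_mul_choose_eq (s + t) s
    have e2' : ((s : ℚ) + t + 1) * ((s + t).choose s : ℚ)
      = ((s + (t + 1)).choose (s + 1) : ℚ) * (s + 1) := by exact_mod_cast e2
    simp [hoggatt, Finset.prod_range_succ, add_assoc]
    push_cast at e1
    have hs : (s : ℚ) + 1 ≠ 0 := by positivity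
    field_simp
    linear_combination ((s + (t + 1)).choose s : ℚ) * (t + 1) * e2'
      - ((s + (t + 1)).choose (s + 1) : ℚ) * (s + 1) * e1
  | succ m ih =>
    rw [show m + 1 + 2 = m + 2 + 1 by ring, hoggatt_succ (m + 2) (s + t) s,
      hoggatt_succ m (s + t + 2), hoggatt_succ (m + 1) (s + t + 1) (s + 1)]
    have h := hoggatt_factor s (t + m + 1) m
    rw [show s + t + (m + 2) = s + (t + m + 1 + 1) by ring,
      show s + t + 2 + m = s + (t + m + 1 + 1) by ring,
      show s + t + 1 + (m + 1) = s + (t + m + 1 + 1) by ring,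
      show s + 2 + m = s + (m + 2) by ring,
      show s + 1 + (m + 1) = s + (m + 2) by ring]
    generalize ((s + (t + m + 1 + 1)).choose s : ℚ) / ((s + (m + 2)).choose s : ℚ) = a at *
    generalize ((s + (t + m + 1 + 1)).choose (s + 1) : ℚ) /
      ((s + (m + 2)).choose (s + 1) : ℚ) = b at *
    generalize ((s + (t + m + 1 + 1)).choose (s + 2) : ℚ) /
      ((s + (m + 2)).choose (s + 2) : ℚ) = c at *
    generalize hoggatt (m + 2) (s + t) s = A at *
    generalize hoggatt m (s + t + 2) (s + 2) = C at *
    generalize hoggatt (m + 1) (s + t + 1) (s + 1) = B at *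
    have h1 : ((m : ℚ) + 1) * ((t : ℚ) + m + 1) ≠ 0 := by positivity
    apply mul_left_cancel₀ h1
    push_cast at *
    linear_combination (a * c * (t + m + 1 + 1) * (m + 1)) * ih
      + (B ^ 2 * (m + 1) * (s + 1)) * h

/-- For `r ≥ 2` and `s, k ≥ 0`, the identity in `ℚ`:
`⟨k choose s⟩_r · ⟨k+2 choose s+2⟩_{r-2} · (k+1) · (k+r-s-1)
  = ⟨k+1 choose s+1⟩_{r-1}² · (r-1) · (s+1)`. -/
theorem hoggatt_quadratic_ratio_identity (r s k : ℕ) (hr : 2 ≤ r) :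
    hoggatt r k s * hoggatt (r - 2) (k + 2) (s + 2) *
        ((k : ℚ) + 1) * ((k : ℚ) + r - s - 1) =
    (hoggatt (r - 1) (k + 1) (s + 1)) ^ 2 * ((r : ℚ) - 1) * ((s : ℚ) + 1) := by
  obtain ⟨m, rfl⟩ := Nat.exists_eq_add_of_le' hr
  rw [show m + 2 - 2 = m by omega, show m + 2 - 1 = m + 1 by omega]
  rcases lt_or_ge k s with h | h
  · rw [hoggatt_zero_of_lt (m + 1) k s h, hoggatt_zero_of_lt m (k + 1) (s + 1) (by omega)]
    ring
  · obtain ⟨t, rfl⟩ := Nat.exists_eq_add_of_le h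
    have := hoggatt_aux s t m
    push_cast
    linear_combination this
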